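/- Let Theta = [a_0, a_1, ...] in k((X^{-1})) be badly approximable with |Theta| <= 1/2. Suppose there exist a finite word V, finite words U_k, an increasing sequence of positive integers n_k, and x > 0 such that the continued fraction of Theta begins with U_k V^{[n_k]} for every k, with |V^{[n_k]}| >= x |U_k|, where V^{[n]} is n concatenated copies of V. Let Phi = [mirror(V), mirror(V), mirror(V), ...] be the quadratic power series with purely periodic expansion. Set M = limsup deg a_l and m = liminf deg a_l. If x > M/m, then inf_{q != 0} |q| * ||q Theta|| * ||q Phi|| = 0. -/

import Mathlib

open Polynomial Filter

noncomputable section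
open scoped Classical

namespace Littlewood

variable (k : Type*) [Field k]

/-- The element `X` of `k((X⁻¹))`: the inverse of the Laurent-series variable `t = X⁻¹`. -/
def XLS : LaurentSeries k := (HahnSeries.single (1 : ℤ) (1 : k))⁻¹

variable {k}

/-- Embedding of `k[X]` into `k((X⁻¹))`, sending the polynomial variable to `X`. -/
def emb (p : Polynomial k) : LaurentSeries k := Polynomial.aeval (XLS k) p

/-- The degree of a Laurent series in `X⁻¹`: if `F = ∑_{h ≥ -m} f_h X^{-h}` with
`f_{-m} ≠ 0` then `deg F = m`. -/
def deg (F : LaurentSeries k) : ℤ := -F.order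

/-- The norm `|F| = 2 ^ deg F`, with `|0| = 0`. -/
def lnorm (F : LaurentSeries k) : ℝ := if F = 0 then 0 else (2 : ℝ) ^ (deg F)

/-- Fractional part: the part of the series comprising only negative powers of `X`. -/
def frac (F : LaurentSeries k) : LaurentSeries k where
  coeff n := if 1 ≤ n then F.coeff n else 0
  isPWO_support' := F.isPWO_support'.mono (fun n hn => by
    simp only [Function.mem_support] at hn ⊢
    intro h
    exact hn (by simp [h]))

/-- `‖F‖`: the norm of the fractional part of `F`. -/
def fnorm (F : LaurentSeries k) : ℝ := lnorm (frac F)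

/-- `F` is a rational function. -/
def IsRat (F : LaurentSeries k) : Prop :=
  ∃ p q : Polynomial k, q ≠ 0 ∧ F * emb q = emb p

/-- The polynomial part of a Laurent series (the part with nonnegative powers of `X`). -/
def polyPart (F : LaurentSeries k) : Polynomial k :=
  ∑ i ∈ Finset.range ((-F.order).toNat + 1), Polynomial.C (F.coeff (-(i : ℤ))) * Polynomial.X ^ i

/-- The complete quotients of the continued fraction algorithm applied to `F`. -/
def cfRem (F : LaurentSeries k) : ℕ → LaurentSeries k
  | 0 => F
  | n + 1 => (cfRem F n - emb (polyPart (cfRem F n)))⁻¹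

/-- The partial quotients of the continued fraction expansion of `F`. -/
def pq (F : LaurentSeries k) (n : ℕ) : Polynomial k := polyPart (cfRem F n)

/-- Denominators `q_n` of the convergents of the continued fraction with
partial quotients `a`. -/
def den (a : ℕ → Polynomial k) : ℕ → Polynomial k
  | 0 => 1
  | 1 => a 1
  | n + 2 => a (n + 2) * den a (n + 1) + den a n

/-- Numerators `p_n` of the convergents. -/
def num (a : ℕ → Polynomial k) : ℕ → Polynomial k
  | 0 => a 0
  | 1 => a 1 * a 0 + 1
  | n + 2 => a (n + 2) * num a (n + 1) + num a n

/-- The value of a finite continued fraction `[b_0, b_1, …, b_m]` over `k[X]`. -/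
def finCF : List (Polynomial k) → LaurentSeries k
  | [] => 0
  | [b] => emb b
  | b :: l => emb b + (finCF l)⁻¹

/-- `F` is badly approximable. -/
def Bad (F : LaurentSeries k) : Prop :=
  ∃ c : ℝ, 0 < c ∧ ∀ q : Polynomial k, q ≠ 0 → c ≤ lnorm (emb q) * fnorm (emb q * F)

/-!
Let `q_n` be the denominators of the convergents of `Θ` and let `Q = q_{R+N}`, where the `N` partial
quotients of `Θ` after the first `R` are those of `Φ` in reverse order. Always `|Q| ‖Q Θ‖ ≤ 1`. By
the mirror formula `q_{n-1} / q_n = [0, a_n, …, a_1]`, the fraction `q_{R+N-1} / Q` shares its first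
`N` partial quotients with `Φ`, so their distance is at most `(|q_R| / |Q|) ^ 2` and therefore
`‖Q Φ‖ ≤ |q_R| ^ 2 / |Q|`.

Now `deg q_R` is at most about `M R`, whereas the window contributes at least about `m N` to
`deg Q`. If `N ≥ x R` with `x > M / m`, then `deg Q - 2 deg q_R` is bounded below by a positive
multiple of `N`, up to a constant, and the product tends to zero as `N` grows.
-/

section Norm

@[simp]
lemma lnorm_zero : lnorm (0 : LaurentSeries k) = 0 := if_pos rfl

lemma lnorm_of_ne_zero {F : LaurentSeries k} (hF : F ≠ 0) : lnorm F = 2 ^ (-F.order) :=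
  if_neg hF

lemma lnorm_nonneg (F : LaurentSeries k) : 0 ≤ lnorm F := by
  unfold lnorm
  split_ifs <;> positivity

lemma lnorm_eq_zero {F : LaurentSeries k} : lnorm F = 0 ↔ F = 0 := by
  refine ⟨fun h => ?_, fun h => h ▸ lnorm_zero⟩
  by_contra hF
  exact zpow_ne_zero _ two_ne_zero (lnorm_of_ne_zero hF ▸ h)

lemma lnorm_mul (F G : LaurentSeries k) : lnorm (F * G) = lnorm F * lnorm G := by
  by_cases hF : F = 0
  · simp [hF]
  by_cases hG : G = 0
  · simp [hG]
  rw [lnorm_of_ne_zero hF, lnorm_of_ne_zero hG, lnorm_of_ne_zero (mul_ne_zero hF hG),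
    HahnSeries.order_mul hF hG, neg_add, zpow_add₀ two_ne_zero]

lemma isNonarchimedean_lnorm : IsNonarchimedean (lnorm : LaurentSeries k → ℝ) := by
  intro F G
  by_cases hF : F = 0
  · simp [hF]
  by_cases hG : G = 0
  · simp [hG]
  by_cases hFG : F + G = 0
  · simp [hFG, lnorm_nonneg]
  have h_order : -(F + G).order ≤ max (-F.order) (-G.order) := by
    have := HahnSeries.min_order_le_order_add hFG
    omega
  rw [lnorm_of_ne_zero hF, lnorm_of_ne_zero hG, lnorm_of_ne_zero hFG,
    ← (zpow_right_mono₀ (one_le_two (α := ℝ))).map_max]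
  exact zpow_le_zpow_right₀ one_le_two h_order

/-- The norm of `k((X⁻¹))` bundled as an absolute value, so that Mathlib's lemmas on absolute
values apply to it. -/
def lnormAbv : AbsoluteValue (LaurentSeries k) ℝ where
  toFun := lnorm
  map_mul' := lnorm_mul
  nonneg' := lnorm_nonneg
  eq_zero' _ := lnorm_eq_zero
  add_le' _ _ := isNonarchimedean_lnorm.add_le lnorm_nonneg

lemma lnorm_inv (F : LaurentSeries k) : lnorm F⁻¹ = (lnorm F)⁻¹ := map_inv₀ lnormAbv F

lemma lnorm_div (F G : LaurentSeries k) : lnorm (F / G) = lnorm F / lnorm G :=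
  map_div₀ lnormAbv F G

lemma lnorm_neg (F : LaurentSeries k) : lnorm (-F) = lnorm F := lnormAbv.map_neg F

lemma lnorm_add_eq_left_of_lt {F G : LaurentSeries k} (h : lnorm G < lnorm F) :
    lnorm (F + G) = lnorm F :=
  IsNonarchimedean.add_eq_left_of_lt (f := lnormAbv) isNonarchimedean_lnorm h

lemma lnorm_sub_le_max (F G : LaurentSeries k) : lnorm (F - G) ≤ max (lnorm F) (lnorm G) := by
  simpa only [sub_eq_add_neg, lnorm_neg] using isNonarchimedean_lnorm F (-G)

end Norm

section PolynomialPart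

@[simp]
lemma emb_zero : emb (0 : k[X]) = 0 := map_zero _

@[simp]
lemma emb_one : emb (1 : k[X]) = 1 := map_one _

lemma emb_add (p q : k[X]) : emb (p + q) = emb p + emb q := map_add _ _ _

lemma emb_mul (p q : k[X]) : emb (p * q) = emb p * emb q := map_mul _ _ _

lemma emb_monomial (i : ℕ) (c : k) :
    emb (monomial i c) = HahnSeries.single (-(i : ℤ)) c := by
  rw [emb, aeval_monomial, XLS, HahnSeries.inv_single, HahnSeries.single_pow,
    HahnSeries.algebraMap_apply', ← PowerSeries.C_eq_algebraMap, HahnSeries.ofPowerSeries_C]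
  simp [HahnSeries.C_apply, HahnSeries.single_mul_single]

lemma coeff_emb (p : k[X]) (n : ℤ) :
    (emb p).coeff n = if 1 ≤ n then 0 else p.coeff (-n).toNat := by
  induction p using Polynomial.induction_on' with
  | add p q hp hq =>
    rw [emb_add, HahnSeries.coeff_add, hp, hq]
    split_ifs <;> simp
  | monomial i c =>
    rw [emb_monomial, HahnSeries.coeff_single, coeff_monomial]
    grind

lemma emb_injective : Function.Injective (emb : k[X] → LaurentSeries k) := by
  intro p q h
  ext i
  have h_coeff := congrArg (fun F => F.coeff (-(i : ℤ))) h
  simpa [coeff_emb, show ¬(1 : ℤ) ≤ -i by omega] using h_coeff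

lemma emb_ne_zero {p : k[X]} (hp : p ≠ 0) : emb p ≠ 0 :=
  emb_zero (k := k) ▸ emb_injective.ne hp

lemma order_emb {p : k[X]} (hp : p ≠ 0) : (emb p).order = -(p.natDegree : ℤ) := by
  apply le_antisymm
  · apply HahnSeries.order_le_of_coeff_ne_zero
    rw [coeff_emb, if_neg (by omega), neg_neg, Int.toNat_natCast]
    exact leadingCoeff_ne_zero.2 hp
  · rw [HahnSeries.le_order_iff_forall (emb_ne_zero hp)]
    intro j hj
    rw [coeff_emb, if_neg (by omega), coeff_eq_zero_of_natDegree_lt (by omega)]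

lemma lnorm_emb {p : k[X]} (hp : p ≠ 0) : lnorm (emb p) = 2 ^ p.natDegree := by
  rw [lnorm_of_ne_zero (emb_ne_zero hp), order_emb hp, neg_neg, zpow_natCast]

lemma coeff_frac (F : LaurentSeries k) (n : ℤ) :
    (frac F).coeff n = if 1 ≤ n then F.coeff n else 0 := rfl

lemma frac_emb_add (p : k[X]) (F : LaurentSeries k) : frac (emb p + F) = frac F := by
  ext n
  simp only [coeff_frac, HahnSeries.coeff_add, coeff_emb]
  split_ifs <;> simp

lemma frac_eq_self {F : LaurentSeries k} (hF : lnorm F < 1) : frac F = F := by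
  ext n
  rw [coeff_frac]
  split_ifs with hn
  · rfl
  · by_cases hF0 : F = 0
    · simp [hF0]
    rw [lnorm_of_ne_zero hF0, zpow_lt_one_iff_right₀ one_lt_two] at hF
    exact (HahnSeries.coeff_eq_zero_of_lt_order (by omega)).symm

lemma lnorm_frac_le_half (F : LaurentSeries k) : lnorm (frac F) ≤ 1 / 2 := by
  by_cases hF : frac F = 0
  · simp [hF]
  have h_order : 1 ≤ (frac F).order :=
    (HahnSeries.le_order_iff_forall hF).2 fun j hj => by rw [coeff_frac, if_neg (by omega)]
  calc lnorm (frac F) = 2 ^ (-(frac F).order) := lnorm_of_ne_zero hF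
    _ ≤ 2 ^ (-1 : ℤ) := zpow_le_zpow_right₀ one_le_two (by omega)
    _ = 1 / 2 := by norm_num

lemma lnorm_frac_lt_one (F : LaurentSeries k) : lnorm (frac F) < 1 :=
  (lnorm_frac_le_half F).trans_lt one_half_lt_one

lemma lnorm_frac_le (F : LaurentSeries k) : lnorm (frac F) ≤ lnorm F := by
  by_cases hF : lnorm F < 1
  · rw [frac_eq_self hF]
  · exact (lnorm_frac_lt_one F).le.trans (not_lt.1 hF)

lemma fnorm_nonneg (F : LaurentSeries k) : 0 ≤ fnorm F := lnorm_nonneg _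

lemma fnorm_le_lnorm_sub_emb (F : LaurentSeries k) (p : k[X]) : fnorm F ≤ lnorm (F - emb p) := by
  rw [fnorm, ← add_sub_cancel (emb p) F, frac_emb_add, add_sub_cancel]
  exact lnorm_frac_le _

lemma coeff_polyPart (F : LaurentSeries k) (i : ℕ) :
    (polyPart F).coeff i = F.coeff (-(i : ℤ)) := by
  simp only [polyPart, finsetSum_coeff, coeff_C_mul_X_pow, Finset.sum_ite_eq, Finset.mem_range]
  split_ifs with hi
  · rfl
  · exact (HahnSeries.coeff_eq_zero_of_lt_order (by omega)).symm

lemma emb_polyPart_add_frac (F : LaurentSeries k) : emb (polyPart F) + frac F = F := by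
  ext n
  rw [HahnSeries.coeff_add, coeff_emb, coeff_frac, coeff_polyPart]
  split_ifs with hn
  · rw [zero_add]
  · rw [Int.toNat_of_nonneg (by omega), neg_neg, add_zero]

lemma sub_emb_polyPart (F : LaurentSeries k) : F - emb (polyPart F) = frac F :=
  sub_eq_iff_eq_add'.2 (emb_polyPart_add_frac F).symm

lemma fnorm_emb_mul_le (F : LaurentSeries k) {p q : k[X]} (hq : q ≠ 0) :
    fnorm (emb q * F) ≤ lnorm (emb q) * lnorm (frac F - emb p / emb q) := by
  have h_eq : emb q * F - emb (q * polyPart F + p) = emb q * (frac F - emb p / emb q) := by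
    have hq' := emb_ne_zero hq
    rw [← sub_emb_polyPart, emb_add, emb_mul]
    field_simp
    ring
  rw [← lnorm_mul, ← h_eq]
  exact fnorm_le_lnorm_sub_emb _ _

lemma polyPart_emb_add (p : k[X]) {F : LaurentSeries k} (hF : lnorm F < 1) :
    polyPart (emb p + F) = p := by
  apply emb_injective
  rw [← add_left_inj (frac (emb p + F)), emb_polyPart_add_frac, frac_emb_add, frac_eq_self hF]

lemma polyPart_ne_zero_iff {F : LaurentSeries k} : polyPart F ≠ 0 ↔ 1 ≤ lnorm F := by
  rw [← not_lt, not_iff_not]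
  refine ⟨fun h => ?_, fun h => ?_⟩
  · rw [← emb_polyPart_add_frac F, h, emb_zero, zero_add]
    exact lnorm_frac_lt_one F
  · simpa using polyPart_emb_add 0 h

lemma lnorm_eq_two_pow_natDegree_polyPart {F : LaurentSeries k} (h : polyPart F ≠ 0) :
    lnorm F = 2 ^ (polyPart F).natDegree := by
  rw [← lnorm_emb h]
  conv_lhs => rw [← emb_polyPart_add_frac F]
  apply lnorm_add_eq_left_of_lt
  calc lnorm (frac F) < 1 := lnorm_frac_lt_one F
    _ ≤ lnorm (emb (polyPart F)) := by rw [lnorm_emb h]; exact one_le_pow₀ one_le_two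

end PolynomialPart

section PartialQuotients

variable {F G : LaurentSeries k} {n : ℕ}

lemma cfRem_succ (F : LaurentSeries k) (n : ℕ) : cfRem F (n + 1) = (frac (cfRem F n))⁻¹ := by
  rw [cfRem, sub_emb_polyPart]

lemma pq_succ_ne_zero_iff : pq F (n + 1) ≠ 0 ↔ frac (cfRem F n) ≠ 0 := by
  rw [pq, polyPart_ne_zero_iff, cfRem_succ, lnorm_inv]
  refine ⟨fun h h0 => ?_, fun h => ?_⟩
  · rw [h0, lnorm_zero, inv_zero] at h
    exact absurd h zero_lt_one.not_ge
  · exact (one_le_inv₀ (lnormAbv.pos h)).2 (lnorm_frac_lt_one _).le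

lemma lnorm_frac_cfRem (h : pq F (n + 1) ≠ 0) :
    lnorm (frac (cfRem F n)) = (2 ^ (pq F (n + 1)).natDegree)⁻¹ := by
  rw [pq, ← lnorm_eq_two_pow_natDegree_polyPart h, cfRem_succ, lnorm_inv, inv_inv]

lemma natDegree_pq_succ_pos (h : pq F (n + 1) ≠ 0) : 0 < (pq F (n + 1)).natDegree := by
  by_contra! h0
  have h_norm := lnorm_frac_cfRem h
  rw [Nat.le_zero.1 h0, pow_zero, inv_one] at h_norm
  exact (lnorm_frac_lt_one _).ne h_norm

lemma frac_cfRem_mul_eq_one (h : pq F (n + 1) ≠ 0) :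
    frac (cfRem F n) * (emb (pq F (n + 1)) + frac (cfRem F (n + 1))) = 1 := by
  rw [pq, emb_polyPart_add_frac, cfRem_succ, mul_inv_cancel₀ (pq_succ_ne_zero_iff.1 h)]

/-- One step of the algorithm turns `frac F_N - frac G_N` into
`-(frac F_N) (frac G_N) (frac F_{N+1} - frac G_{N+1})` as long as the partial quotients agree, and
both factors have norm `2 ^ (-deg a_{N+1})`. -/
lemma lnorm_frac_sub_frac_of_pq_eq {N : ℕ} (h : ∀ i < N, pq F (i + 1) = pq G (i + 1))
    (hG : ∀ i < N, pq G (i + 1) ≠ 0) :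
    lnorm (frac F - frac G) * (2 ^ ∑ i ∈ Finset.range N, (pq G (i + 1)).natDegree) ^ 2 =
      lnorm (frac (cfRem F N) - frac (cfRem G N)) := by
  induction N with
  | zero => simp [cfRem]
  | succ N ih =>
    have hN := h N N.lt_succ_self
    have hGN := hG N N.lt_succ_self
    have hFN : pq F (N + 1) ≠ 0 := hN ▸ hGN
    have h_step : frac (cfRem F N) - frac (cfRem G N) = -(frac (cfRem F N) * frac (cfRem G N) *
        (frac (cfRem F (N + 1)) - frac (cfRem G (N + 1)))) := by
      have hF1 := frac_cfRem_mul_eq_one hFN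
      rw [hN] at hF1
      linear_combination frac (cfRem G N) * hF1 -
        frac (cfRem F N) * frac_cfRem_mul_eq_one hGN
    have h_prev := ih (fun i hi => h i (hi.trans N.lt_succ_self))
      fun i hi => hG i (hi.trans N.lt_succ_self)
    rw [h_step, lnorm_neg, lnorm_mul, lnorm_mul, lnorm_frac_cfRem hFN, lnorm_frac_cfRem hGN,
      hN] at h_prev
    rw [Finset.sum_range_succ, pow_add, mul_pow, ← mul_assoc, h_prev]
    field_simp

end PartialQuotients

section Convergents

variable {F : LaurentSeries k} {a : ℕ → k[X]}

lemma natDegree_den : ∀ {n : ℕ}, (∀ i < n, 0 < (a (i + 1)).natDegree) →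
    (den a n).natDegree = ∑ i ∈ Finset.range n, (a (i + 1)).natDegree
  | 0, _ => by simp [den]
  | 1, _ => by simp [den]
  | n + 2, ha => by
    have h₀ := natDegree_den fun i (hi : i < n) => ha i (by omega)
    have h₁ := natDegree_den fun i (hi : i < n + 1) => ha i (by omega)
    have h_an := ha n (by omega)
    have h_last := ha (n + 1) (by omega)
    rw [Finset.sum_range_succ] at h₁
    have h_mul : (a (n + 2) * den a (n + 1)).natDegree =
        (a (n + 2)).natDegree + (den a (n + 1)).natDegree :=
      natDegree_mul (ne_zero_of_natDegree_gt h_last)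
        (ne_zero_of_natDegree_gt (n := 0) (by omega))
    rw [den, natDegree_add_eq_left_of_natDegree_lt (by omega), h_mul, h₁,
      Finset.sum_range_succ _ (n + 1), Finset.sum_range_succ _ n]
    ring

lemma den_ne_zero {n : ℕ} (ha : ∀ i < n, 0 < (a (i + 1)).natDegree) : den a n ≠ 0 := by
  rcases n with _ | n
  · exact one_ne_zero
  · apply ne_zero_of_natDegree_gt (n := 0)
    rw [natDegree_den ha, Finset.sum_range_succ]
    exact Nat.add_pos_right _ (ha n n.lt_succ_self)

lemma den_mul_sub_num : ∀ {n : ℕ}, (∀ i < n, pq F (i + 1) ≠ 0) →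
    emb (den (pq F) n) * F - emb (num (pq F) n) =
      (-1) ^ n * ∏ i ∈ Finset.range (n + 1), frac (cfRem F i)
  | 0, _ => by simpa [den, num, pq, cfRem] using sub_emb_polyPart F
  | 1, h => by
    have h₀ := emb_polyPart_add_frac F
    have h₁ := frac_cfRem_mul_eq_one (h 0 one_pos)
    simp only [den, num, pq, cfRem, sub_emb_polyPart, emb_add, emb_mul, emb_one,
      Finset.prod_range_succ, Finset.prod_range_zero] at h₁ ⊢
    linear_combination h₁ - emb (polyPart (frac F)⁻¹) * h₀
  | n + 2, h => by
    have h₀ := den_mul_sub_num fun i (hi : i < n) => h i (by omega)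
    have h₁ := den_mul_sub_num fun i (hi : i < n + 1) => h i (by omega)
    have h₂ := frac_cfRem_mul_eq_one (h (n + 1) (by omega))
    simp only [den, num, emb_add, emb_mul, Finset.prod_range_succ] at h₀ h₁ ⊢
    linear_combination emb (pq F (n + 2)) * h₁ + h₀ +
      (-1) ^ (n + 1) * (∏ i ∈ Finset.range n, frac (cfRem F i)) * frac (cfRem F n) * h₂

lemma lnorm_den_mul_sub_num {n : ℕ} (h : ∀ i ≤ n, pq F (i + 1) ≠ 0) :
    lnorm (emb (den (pq F) n) * F - emb (num (pq F) n)) =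
      (2 ^ ∑ i ∈ Finset.range (n + 1), (pq F (i + 1)).natDegree)⁻¹ := by
  have h_sign : lnorm ((-1 : LaurentSeries k) ^ n) = 1 := by
    change lnormAbv _ = 1
    simp
  have h_prod : lnorm (∏ i ∈ Finset.range (n + 1), frac (cfRem F i)) =
      ∏ i ∈ Finset.range (n + 1), lnorm (frac (cfRem F i)) := map_prod lnormAbv _ _
  rw [den_mul_sub_num fun i hi => h i hi.le, lnorm_mul, h_sign, one_mul, h_prod,
    ← Finset.prod_pow_eq_pow_sum, ← Finset.prod_inv_distrib]
  exact Finset.prod_congr rfl fun i hi => lnorm_frac_cfRem (h i (Finset.mem_range_succ_iff.1 hi))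

lemma lnorm_den_mul_fnorm_le {n : ℕ} (h : ∀ i ≤ n, pq F (i + 1) ≠ 0) :
    lnorm (emb (den (pq F) n)) * fnorm (emb (den (pq F) n) * F) ≤
      (2 ^ (pq F (n + 1)).natDegree)⁻¹ := by
  have h_pos : ∀ i < n, 0 < (pq F (i + 1)).natDegree :=
    fun i hi => natDegree_pq_succ_pos (h i hi.le)
  have h_fnorm := fnorm_le_lnorm_sub_emb (emb (den (pq F) n) * F) (num (pq F) n)
  rw [lnorm_den_mul_sub_num h, Finset.sum_range_succ, ← natDegree_den h_pos] at h_fnorm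
  rw [lnorm_emb (den_ne_zero h_pos)]
  calc 2 ^ (den (pq F) n).natDegree * fnorm (emb (den (pq F) n) * F)
      ≤ 2 ^ (den (pq F) n).natDegree *
          (2 ^ ((den (pq F) n).natDegree + (pq F (n + 1)).natDegree))⁻¹ := by gcongr
    _ = (2 ^ (pq F (n + 1)).natDegree)⁻¹ := by
      rw [pow_add]
      field_simp

end Convergents

section BadlyApproximable

variable {F : LaurentSeries k}

lemma Bad.pq_succ_ne_zero (hF : Bad F) (n : ℕ) : pq F (n + 1) ≠ 0 := by
  induction n using Nat.strong_induction_on with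
  | _ n ih =>
    obtain ⟨c, hc, h_bad⟩ := hF
    rw [pq_succ_ne_zero_iff]
    intro h_frac
    have h_err : emb (den (pq F) n) * F - emb (num (pq F) n) = 0 := by
      rw [den_mul_sub_num ih, Finset.prod_range_succ, h_frac, mul_zero, mul_zero]
    have h_fnorm := fnorm_le_lnorm_sub_emb (emb (den (pq F) n) * F) (num (pq F) n)
    rw [h_err, lnorm_zero] at h_fnorm
    have h_le := h_bad _ (den_ne_zero fun i hi => natDegree_pq_succ_pos (ih i hi))
    rw [le_antisymm h_fnorm (fnorm_nonneg _), mul_zero] at h_le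
    exact hc.not_ge h_le

lemma Bad.natDegree_pq_succ_pos (hF : Bad F) (n : ℕ) : 0 < (pq F (n + 1)).natDegree :=
  Littlewood.natDegree_pq_succ_pos (hF.pq_succ_ne_zero n)

lemma Bad.exists_natDegree_pq_succ_le (hF : Bad F) :
    ∃ B : ℝ, ∀ n, ((pq F (n + 1)).natDegree : ℝ) ≤ B := by
  have h_ne := hF.pq_succ_ne_zero
  obtain ⟨c, hc, h_bad⟩ := hF
  refine ⟨c⁻¹, fun n => ?_⟩
  have h_le : c ≤ (2 ^ (pq F (n + 1)).natDegree)⁻¹ :=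
    (h_bad _ (den_ne_zero fun i _ => Littlewood.natDegree_pq_succ_pos (h_ne i))).trans
      (lnorm_den_mul_fnorm_le fun i _ => h_ne i)
  calc ((pq F (n + 1)).natDegree : ℝ) ≤ 2 ^ (pq F (n + 1)).natDegree :=
        mod_cast Nat.lt_two_pow_self.le
    _ ≤ c⁻¹ := (le_inv_comm₀ hc (by positivity)).1 h_le

end BadlyApproximable

section Mirror

variable {a : ℕ → k[X]}

lemma emb_den_succ_succ_div (ha : ∀ i, 0 < (a (i + 1)).natDegree) (n : ℕ) :
    emb (den a (n + 2)) / emb (den a (n + 1)) =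
      emb (a (n + 2)) + emb (den a n) / emb (den a (n + 1)) := by
  have h := emb_ne_zero (den_ne_zero (n := n + 1) fun i _ => ha i)
  rw [den, emb_add, emb_mul]
  field_simp

lemma lnorm_den_div_den_succ_lt_one (ha : ∀ i, 0 < (a (i + 1)).natDegree) (n : ℕ) :
    lnorm (emb (den a n) / emb (den a (n + 1))) < 1 := by
  have h_lt : (den a n).natDegree < (den a (n + 1)).natDegree := by
    rw [natDegree_den fun i _ => ha i, natDegree_den fun i _ => ha i, Finset.sum_range_succ]
    exact Nat.lt_add_of_pos_right (ha n)
  rw [lnorm_div, lnorm_emb (den_ne_zero fun i _ => ha i),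
    lnorm_emb (den_ne_zero fun i _ => ha i), div_lt_one (by positivity)]
  exact pow_lt_pow_right₀ one_lt_two h_lt

lemma polyPart_den_succ_div_den (ha : ∀ i, 0 < (a (i + 1)).natDegree) (n : ℕ) :
    polyPart (emb (den a (n + 1)) / emb (den a n)) = a (n + 1) := by
  rcases n with _ | n
  · simpa [den] using polyPart_emb_add (a 1) (F := 0) (lnorm_zero.trans_lt one_pos)
  · rw [emb_den_succ_succ_div ha, polyPart_emb_add _ (lnorm_den_div_den_succ_lt_one ha n)]

lemma frac_cfRem_den_div_den_succ (ha : ∀ i, 0 < (a (i + 1)).natDegree) (m i : ℕ) :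
    frac (cfRem (emb (den a (m + i)) / emb (den a (m + i + 1))) i) =
      emb (den a m) / emb (den a (m + 1)) := by
  induction i generalizing m with
  | zero => exact frac_eq_self (lnorm_den_div_den_succ_lt_one ha m)
  | succ i ih =>
    rw [cfRem_succ, show m + (i + 1) = m + 1 + i by ring, ih, inv_div, emb_den_succ_succ_div ha,
      frac_emb_add, frac_eq_self (lnorm_den_div_den_succ_lt_one ha m)]

lemma pq_den_div_den_succ (ha : ∀ i, 0 < (a (i + 1)).natDegree) (m i : ℕ) :
    pq (emb (den a (m + i)) / emb (den a (m + i + 1))) (i + 1) = a (m + 1) := by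
  rw [pq, cfRem_succ, frac_cfRem_den_div_den_succ ha, inv_div, polyPart_den_succ_div_den ha]

lemma natDegree_den_add (ha : ∀ i, 0 < (a (i + 1)).natDegree) (R N : ℕ) :
    (den a (R + N)).natDegree =
      (den a R).natDegree + ∑ i ∈ Finset.range N, (a (R + N - i)).natDegree := by
  rw [natDegree_den fun i _ => ha i, natDegree_den fun i _ => ha i, Finset.sum_range_add,
    ← Finset.sum_range_reflect _ N]
  congr 1
  refine Finset.sum_congr rfl fun i hi => ?_
  rw [Finset.mem_range] at hi
  rw [show R + (N - 1 - i) + 1 = R + N - i by omega]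

/-- The mirror formula gives `q_{n-1} / q_n = [0, a_n, …, a_1]`, which shares its first
`N + 1` partial quotients with `Φ`. -/
lemma lnorm_frac_sub_den_div_den_succ_lt_of_mirror (ha : ∀ i, 0 < (a (i + 1)).natDegree)
    {Φ : LaurentSeries k} {R N : ℕ} (hΦ : ∀ i ≤ N, pq Φ (i + 1) = a (R + N + 1 - i)) :
    lnorm (frac Φ - emb (den a (R + N)) / emb (den a (R + N + 1))) *
      (2 ^ ∑ i ∈ Finset.range (N + 1), (a (R + N + 1 - i)).natDegree) ^ 2 < 1 := by
  set G := emb (den a (R + N)) / emb (den a (R + N + 1)) with hG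
  have h_pq : ∀ i < N + 1, pq Φ (i + 1) = pq G (i + 1) := fun i hi => by
    have h_mirror := pq_den_div_den_succ ha (R + N - i) i
    rw [show R + N - i + i = R + N by omega, ← hG] at h_mirror
    rw [hΦ i (by omega), h_mirror, show R + N - i + 1 = R + N + 1 - i by omega]
  have h_pq_G : ∀ i < N + 1, pq G (i + 1) = a (R + N + 1 - i) :=
    fun i hi => (h_pq i hi).symm.trans (hΦ i (by omega))
  have h_pq_ne : ∀ i < N + 1, pq G (i + 1) ≠ 0 := fun i hi => by
    rw [h_pq_G i hi, show R + N + 1 - i = R + N - i + 1 by omega]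
    exact ne_zero_of_natDegree_gt (ha _)
  have h_close := lnorm_frac_sub_frac_of_pq_eq h_pq h_pq_ne
  rw [frac_eq_self (lnorm_den_div_den_succ_lt_one ha _), Finset.sum_congr rfl fun i hi => by
    rw [h_pq_G i (Finset.mem_range.1 hi)]] at h_close
  rw [h_close]
  exact (lnorm_sub_le_max _ _).trans_lt (max_lt (lnorm_frac_lt_one _) (lnorm_frac_lt_one _))

lemma lnorm_den_mul_fnorm_le_of_mirror (ha : ∀ i, 0 < (a (i + 1)).natDegree)
    {Φ : LaurentSeries k} {R N : ℕ} (hΦ : ∀ i < N, pq Φ (i + 1) = a (R + N - i)) :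
    lnorm (emb (den a (R + N))) * fnorm (emb (den a (R + N)) * Φ) ≤
      lnorm (emb (den a R)) ^ 2 := by
  have h_ne (n : ℕ) : den a n ≠ 0 := den_ne_zero fun i _ => ha i
  rcases N with _ | N
  · have h_fnorm : fnorm (emb (den a R) * Φ) ≤ lnorm (emb (den a R)) := by
      rw [lnorm_emb (h_ne R)]
      exact (lnorm_frac_lt_one _).le.trans (one_le_pow₀ one_le_two)
    rw [sq]
    exact mul_le_mul_of_nonneg_left h_fnorm (lnorm_nonneg _)
  · rw [← add_assoc] at hΦ ⊢
    set q := den a (R + N + 1)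
    set E := lnorm (frac Φ - emb (den a (R + N)) / emb q)
    set T := ∑ i ∈ Finset.range (N + 1), (a (R + N + 1 - i)).natDegree
    have h_close : E * (2 ^ T) ^ 2 < 1 :=
      lnorm_frac_sub_den_div_den_succ_lt_of_mirror ha fun i hi => hΦ i (by omega)
    have h_q : lnorm (emb q) = lnorm (emb (den a R)) * 2 ^ T := by
      rw [lnorm_emb (h_ne _), lnorm_emb (h_ne _), ← pow_add]
      exact congrArg _ (natDegree_den_add ha R (N + 1))
    calc lnorm (emb q) * fnorm (emb q * Φ) ≤ lnorm (emb q) * (lnorm (emb q) * E) :=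
          mul_le_mul_of_nonneg_left (fnorm_emb_mul_le Φ (h_ne _)) (lnorm_nonneg _)
      _ = lnorm (emb (den a R)) ^ 2 * (E * (2 ^ T) ^ 2) := by
          rw [h_q]
          ring
      _ ≤ lnorm (emb (den a R)) ^ 2 := mul_le_of_le_one_right (sq_nonneg _) h_close.le

end Mirror

section Growth

lemma exists_mul_sub_le_sum_range_add {f : ℕ → ℝ} {c : ℝ} (h : ∀ᶠ i in atTop, c ≤ f i) :
    ∃ C : ℝ, ∀ R N : ℕ, c * N - C ≤ ∑ i ∈ Finset.range N, f (R + i) := by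
  set g : ℕ → ℝ := fun i => max (c - f i) 0
  have hg_summable : Summable g := by
    refine summable_of_hasFiniteSupport ?_
    rw [← Nat.cofinite_eq_atTop] at h
    refine Set.Finite.subset h fun i hi hci => hi ?_
    exact max_eq_right (sub_nonpos.2 hci)
  refine ⟨∑' i, g i, fun R N => ?_⟩
  have h_defect : ∑ i ∈ Finset.range N, (c - f (R + i)) ≤ ∑' i, g i :=
    calc ∑ i ∈ Finset.range N, (c - f (R + i)) ≤ ∑ i ∈ Finset.range N, g (R + i) :=
          Finset.sum_le_sum fun i _ => le_max_left _ _
      _ = ∑ i ∈ (Finset.range N).map (addLeftEmbedding R), g i := by simp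
      _ ≤ ∑' i, g i := hg_summable.sum_le_tsum _ fun i _ => le_max_right _ _
  rw [Finset.sum_sub_distrib, Finset.sum_const, Finset.card_range, nsmul_eq_mul] at h_defect
  linarith

lemma eventually_add_two_mul_sum_range_le {f : ℕ → ℝ} {x : ℝ}
    (h_above : IsBoundedUnder (· ≤ ·) atTop f) (h_below : IsBoundedUnder (· ≥ ·) atTop f)
    (h_pos : 0 < liminf f atTop) (hx : limsup f atTop / liminf f atTop < x) (t : ℝ) :
    ∀ᶠ N : ℕ in atTop, ∀ R : ℕ, x * R ≤ N →
      t + 2 * ∑ i ∈ Finset.range R, f i ≤ ∑ i ∈ Finset.range (R + N), f i := by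
  have h_le : liminf f atTop ≤ limsup f atTop := liminf_le_limsup h_above h_below
  have hx_pos : 0 < x := (div_pos (h_pos.trans_le h_le) h_pos).trans hx
  obtain ⟨m', hm'_gt, hm'_lt⟩ : ∃ m', limsup f atTop / x < m' ∧ m' < liminf f atTop :=
    exists_between ((div_lt_comm₀ h_pos hx_pos).1 hx)
  obtain ⟨M', hM'_gt, hM'_lt⟩ : ∃ M', limsup f atTop < M' ∧ M' < m' * x :=
    exists_between ((div_lt_iff₀ hx_pos).1 hm'_gt)
  obtain ⟨C₁, hC₁⟩ := exists_mul_sub_le_sum_range_add (f := fun i => -f i) (c := -M')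
    ((eventually_lt_of_limsup_lt hM'_gt h_above).mono fun i hi => neg_le_neg hi.le)
  obtain ⟨C₂, hC₂⟩ := exists_mul_sub_le_sum_range_add
    ((eventually_lt_of_lt_liminf hm'_lt h_below).mono fun i hi => hi.le)
  have h_rate : 0 < m' - M' / x := sub_pos.2 ((div_lt_iff₀ hx_pos).2 hM'_lt)
  filter_upwards [(tendsto_natCast_atTop_atTop.const_mul_atTop h_rate).eventually_ge_atTop
    (t + C₁ + C₂)] with N hN R hRN
  have h_head : ∑ i ∈ Finset.range R, f i ≤ M' * R + C₁ := by
    have := hC₁ 0 R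
    simp only [zero_add, Finset.sum_neg_distrib] at this
    linarith
  have h_ratio : M' * R ≤ M' / x * N := by
    have hM'_pos : 0 < M' := (h_pos.trans_le h_le).trans hM'_gt
    calc M' * R = M' / x * (x * R) := by field_simp
      _ ≤ M' / x * N := by gcongr
  rw [Finset.sum_range_add]
  linarith [hC₂ R N]

lemma Bad.eventually_add_two_mul_natDegree_den_le {F : LaurentSeries k} (hF : Bad F) {x : ℝ}
    (hx : limsup (fun l : ℕ => ((pq F l).natDegree : ℝ)) atTop /
      liminf (fun l : ℕ => ((pq F l).natDegree : ℝ)) atTop < x) (t : ℕ) :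
    ∀ᶠ N : ℕ in atTop, ∀ R : ℕ, x * R ≤ N →
      t + 2 * (den (pq F) R).natDegree ≤ (den (pq F) (R + N)).natDegree := by
  obtain ⟨B, hB⟩ := hF.exists_natDegree_pq_succ_le
  have h_one_le (l : ℕ) : (1 : ℝ) ≤ (pq F (l + 1)).natDegree :=
    mod_cast hF.natDegree_pq_succ_pos l
  have h_above : IsBoundedUnder (· ≤ ·) atTop fun l => ((pq F (l + 1)).natDegree : ℝ) :=
    isBoundedUnder_of ⟨B, hB⟩
  have h_pos : 0 < liminf (fun l => ((pq F (l + 1)).natDegree : ℝ)) atTop :=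
    one_pos.trans_le
      (le_liminf_of_le h_above.isCoboundedUnder_ge (Eventually.of_forall h_one_le))
  rw [← limsup_nat_add _ 1, ← liminf_nat_add _ 1] at hx
  filter_upwards [eventually_add_two_mul_sum_range_le h_above
    (isBoundedUnder_of ⟨1, h_one_le⟩) h_pos hx t] with N hN R hRN
  have h_deg (n : ℕ) := natDegree_den (n := n) fun i _ => hF.natDegree_pq_succ_pos i
  rw [h_deg, h_deg]
  exact_mod_cast hN R hRN

end Growth

section Product

lemma Bad.lnorm_mul_fnorm_mul_fnorm_den_le_of_mirror {Θ Φ : LaurentSeries k} (hΘ : Bad Θ)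
    {R N : ℕ} (hΦ : ∀ i < N, pq Φ (i + 1) = pq Θ (R + N - i)) :
    lnorm (emb (den (pq Θ) (R + N))) * fnorm (emb (den (pq Θ) (R + N)) * Θ) *
        fnorm (emb (den (pq Θ) (R + N)) * Φ) ≤
      2 ^ (2 * (den (pq Θ) R).natDegree) / 2 ^ (den (pq Θ) (R + N)).natDegree := by
  have h_ne (n : ℕ) : den (pq Θ) n ≠ 0 := den_ne_zero fun i _ => hΘ.natDegree_pq_succ_pos i
  have hΘ_le : lnorm (emb (den (pq Θ) (R + N))) * fnorm (emb (den (pq Θ) (R + N)) * Θ) ≤ 1 :=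
    (lnorm_den_mul_fnorm_le fun i _ => hΘ.pq_succ_ne_zero i).trans
      (inv_le_one_of_one_le₀ (one_le_pow₀ one_le_two))
  have hΦ_le := lnorm_den_mul_fnorm_le_of_mirror hΘ.natDegree_pq_succ_pos hΦ
  rw [lnorm_emb (h_ne _), lnorm_emb (h_ne _), ← pow_mul', ← le_div_iff₀' (by positivity)]
    at hΦ_le
  exact (mul_le_of_le_one_left (fnorm_nonneg _) hΘ_le).trans hΦ_le

theorem theorem4_general {Θ Φ : LaurentSeries k} (hbad : Bad Θ) {x : ℝ}
    (hx : limsup (fun l : ℕ => ((pq Θ l).natDegree : ℝ)) atTop /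
      liminf (fun l : ℕ => ((pq Θ l).natDegree : ℝ)) atTop < x)
    (hmirror : ∀ N₀ : ℕ, ∃ N ≥ N₀, ∃ R : ℕ, x * R ≤ N ∧
      ∀ i < N, pq Φ (i + 1) = pq Θ (R + N - i)) :
    ∀ ε : ℝ, 0 < ε → ∃ q : k[X], q ≠ 0 ∧
      lnorm (emb q) * fnorm (emb q * Θ) * fnorm (emb q * Φ) < ε := by
  intro ε hε
  obtain ⟨t, ht⟩ := exists_pow_lt_of_lt_one hε (one_half_lt_one (α := ℝ))
  obtain ⟨N₀, hN₀⟩ := eventually_atTop.1 (hbad.eventually_add_two_mul_natDegree_den_le hx t)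
  obtain ⟨N, hN, R, hRN, hΦ⟩ := hmirror N₀
  refine ⟨den (pq Θ) (R + N), den_ne_zero fun i _ => hbad.natDegree_pq_succ_pos i, ?_⟩
  calc lnorm (emb (den (pq Θ) (R + N))) * fnorm (emb (den (pq Θ) (R + N)) * Θ) *
        fnorm (emb (den (pq Θ) (R + N)) * Φ)
      ≤ 2 ^ (2 * (den (pq Θ) R).natDegree) / 2 ^ (den (pq Θ) (R + N)).natDegree :=
        hbad.lnorm_mul_fnorm_mul_fnorm_den_le_of_mirror hΦ
    _ ≤ (1 / 2) ^ t := by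
        rw [one_div_pow, div_le_div_iff₀ (by positivity) (by positivity), one_mul, ← pow_add]
        exact pow_le_pow_right₀ one_le_two (by linarith [hN₀ N hN R hRN])
    _ < ε := ht

lemma eq_reverse_window_of_periodic {α : Type*} {a b V : ℕ → α} {v n r : ℕ}
    (ha : ∀ i < v * n, a (r + 1 + i) = V (i % v)) (hb : ∀ i, b (i + 1) = V (v - 1 - i % v)) :
    ∀ i < v * n, b (i + 1) = a (r + v * n - i) := by
  intro i hi
  rw [show r + v * n - i = r + 1 + (v * n - (i + 1)) by omega, ha _ (by omega),
    Nat.mul_sub_mod hi, hb, Nat.sub_sub, add_comm 1]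

end Product

theorem theorem4 {k : Type*} [Field k] (Θ Φ : LaurentSeries k)
    (hΘ : ¬ IsRat Θ) (hbad : Bad Θ) (hnorm : lnorm Θ ≤ 1 / 2) (h0 : pq Θ 0 = 0)
    (v : ℕ) (hv : 1 ≤ v) (V : ℕ → Polynomial k)
    (hVdeg : ∀ i : ℕ, i < v → 1 ≤ (V i).natDegree)
    (x : ℝ) (hx : 0 < x) (r nseq : ℕ → ℕ) (hnseq : StrictMono nseq) (hn1 : 1 ≤ nseq 0)
    (hprefix : ∀ K : ℕ, ∀ i : ℕ, i < v * nseq K → pq Θ (r K + 1 + i) = V (i % v))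
    (hxs : ∀ K : ℕ, x * (r K : ℝ) ≤ ((v * nseq K : ℕ) : ℝ))
    (hΦ0 : pq Φ 0 = 0)
    (hΦ : ∀ i : ℕ, pq Φ (i + 1) = V (v - 1 - i % v))
    (M m : ℝ)
    (hM : M = limsup (fun l : ℕ => ((pq Θ l).natDegree : ℝ)) atTop)
    (hm : m = liminf (fun l : ℕ => ((pq Θ l).natDegree : ℝ)) atTop)
    (hxMm : M / m < x) :
    ∀ ε : ℝ, 0 < ε → ∃ q : Polynomial k, q ≠ 0 ∧
      lnorm (emb q) * fnorm (emb q * Θ) * fnorm (emb q * Φ) < ε := by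
  subst hM hm
  exact theorem4_general hbad hxMm fun N₀ => ⟨v * nseq N₀,
    hnseq.le_apply.trans (Nat.le_mul_of_pos_left _ hv), r N₀, hxs N₀,
    eq_reverse_window_of_periodic (hprefix N₀) hΦ⟩

end Littlewood
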